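/- Let τ be a first-order language, T a τ-theory, and M a T-existentially closed τ-structure. Let φ(x⃗, y⃗, z⃗) be a quantifier-free τ-formula and a⃗ a tuple of elements of M. If the Π₂ sentence ∀x⃗ ∃y⃗ φ(x⃗, y⃗, a⃗) (with parameters a⃗) holds in some model N of T_∀ having M as a substructure, then it holds in M. -/

import Mathlib

open FirstOrder FirstOrder.Language

universe u v

namespace ModelCompanionship

variable {L : FirstOrder.Language.{u, v}}

/-- Iterated existential quantification over the last `k` bound variables. -/
def exsN {α : Type*} : ∀ {n k : ℕ}, L.BoundedFormula α (n + k) → L.BoundedFormula α n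
  | _, 0, φ => φ
  | _, _ + 1, φ => exsN φ.ex

/-- A sentence is universal (Π₁) if it is the universal closure of a
quantifier-free formula. -/
def IsUniversalSentence (φ : L.Sentence) : Prop :=
  ∃ (n : ℕ) (ψ : L.BoundedFormula Empty n), ψ.IsQF ∧ φ = ψ.alls

/-- A sentence is Π₂ if it is of the form `∀ x⃗ ∃ y⃗ φ` with `φ` quantifier-free. -/
def IsPi2Sentence (φ : L.Sentence) : Prop :=
  ∃ (m k : ℕ) (ψ : L.BoundedFormula Empty (m + k)), ψ.IsQF ∧ φ = (exsN ψ).alls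

/-- A formula is existential if it is the existential closure of a
quantifier-free formula. -/
def IsExistentialFormula {α : Type*} (φ : L.Formula α) : Prop :=
  ∃ (n : ℕ) (ψ : L.BoundedFormula α n), ψ.IsQF ∧ φ = ψ.exs

/-- A formula is universal if it is the universal closure of a
quantifier-free formula. -/
def IsUniversalFormula {α : Type*} (φ : L.Formula α) : Prop :=
  ∃ (n : ℕ) (ψ : L.BoundedFormula α n), ψ.IsQF ∧ φ = ψ.alls

/-- A bundled nonempty `L`-structure (with domain in universe `max u v`). -/
structure BStruc (L : FirstOrder.Language.{u, v}) where
  carrier : Type (max u v)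
  [str : L.Structure carrier]
  [nonempty' : Nonempty carrier]

instance (N : BStruc L) : L.Structure N.carrier := N.str

instance (N : BStruc L) : Nonempty N.carrier := N.nonempty'

/-- `φ` is a semantic consequence of `T`: it holds in every (nonempty) model of `T`. -/
def Consequence (T : L.Theory) (φ : L.Sentence) : Prop :=
  ∀ M : BStruc L, M.carrier ⊨ T → M.carrier ⊨ φ

/-- A formula with free variables is a semantic consequence of `T` if its universal
closure holds in every (nonempty) model of `T`. -/
def FormulaConsequence {α : Type*} (T : L.Theory) (φ : L.Formula α) : Prop :=
  ∀ M : BStruc L, M.carrier ⊨ T → ∀ v : α → M.carrier, φ.Realize v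

/-- `T_∀`: the set of universal sentences which are consequences of `T`. -/
def univConsequences (T : L.Theory) : L.Theory :=
  {φ | IsUniversalSentence φ ∧ Consequence T φ}

/-- A theory is complete if it is satisfiable and decides every sentence. -/
def IsCompleteTheory (T : L.Theory) : Prop :=
  T.IsSatisfiable ∧ ∀ φ : L.Sentence, Consequence T φ ∨ Consequence T φ.not

/-- A theory is Π₁-complete if it is satisfiable and decides every universal sentence. -/
def Pi1Complete (T : L.Theory) : Prop :=
  T.IsSatisfiable ∧ ∀ φ : L.Sentence, IsUniversalSentence φ →
    (Consequence T φ ∨ Consequence T φ.not)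

/-- An embedding is Σ₁-elementary (`M ≺₁ N`) if it reflects existential formulas
with parameters in the domain. -/
def Sigma1Elementary {M : Type*} {N : Type*} [L.Structure M] [L.Structure N]
    (j : M ↪[L] N) : Prop :=
  ∀ (n : ℕ) (φ : L.Formula (Fin n)), IsExistentialFormula φ →
    ∀ a : Fin n → M, φ.Realize (fun i => j (a i)) → φ.Realize a

/-- An embedding is elementary if it preserves and reflects all first-order formulas. -/
def ElementaryEmb {M : Type*} {N : Type*} [L.Structure M] [L.Structure N]
    (j : M ↪[L] N) : Prop :=
  ∀ (n : ℕ) (φ : L.Formula (Fin n)) (a : Fin n → M),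
    φ.Realize (fun i => j (a i)) ↔ φ.Realize a

/-- `M` is `T`-existentially closed: it embeds into a model of `T` and every
embedding of `M` into a model of `T` is Σ₁-elementary. -/
def IsEC (T : L.Theory) (M : Type*) [L.Structure M] : Prop :=
  (∃ N : BStruc L, N.carrier ⊨ T ∧ Nonempty (M ↪[L] N.carrier)) ∧
  ∀ N : BStruc L, N.carrier ⊨ T → ∀ j : M ↪[L] N.carrier, Sigma1Elementary j

/-- A theory is model complete if every embedding between its models is elementary. -/
def ModelComplete (T : L.Theory) : Prop :=
  ∀ M N : BStruc L, M.carrier ⊨ T → N.carrier ⊨ T →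
    ∀ j : M.carrier ↪[L] N.carrier, ElementaryEmb j

/-- `Tstar` is the model companion of `T`. -/
def IsModelCompanion (T Tstar : L.Theory) : Prop :=
  (∀ M : BStruc L, M.carrier ⊨ T →
    ∃ N : BStruc L, N.carrier ⊨ Tstar ∧ Nonempty (M.carrier ↪[L] N.carrier)) ∧
  (∀ M : BStruc L, M.carrier ⊨ Tstar →
    ∃ N : BStruc L, N.carrier ⊨ T ∧ Nonempty (M.carrier ↪[L] N.carrier)) ∧
  ModelComplete Tstar

/-!
Every model of `T_∀` embeds into a model of `T`: an existential sentence true in it is true in some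
model of `T`, so by compactness its quantifier-free diagram is consistent with `T`. Existential
formulas go up along that embedding, so a `T`-ec structure `M` is Σ₁-elementary already in
every model `N` of `T_∀` extending it. Given `∀ x⃗ ∃ y⃗ φ` in `N`, instantiate `x⃗` at elements of
`M` and reflect the resulting existential formula to `M`.
-/

universe w

section QuantifierFree

variable {α β : Type*} {n : ℕ}

theorem isQF_toFormula {φ : L.BoundedFormula α n} (hφ : φ.IsQF) : φ.toFormula.IsQF := by
  induction hφ with
  | falsum => exact .falsum
  | of_isAtomic hatom =>
    cases hatom with
    | equal => exact (BoundedFormula.IsAtomic.equal _ _).isQF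
    | rel => exact (BoundedFormula.IsAtomic.rel _ _).isQF
  | imp _ _ ih₁ ih₂ => exact ih₁.imp ih₂

theorem isQF_restrictFreeVar [DecidableEq α] {φ : L.BoundedFormula α n} (hφ : φ.IsQF)
    (f : φ.freeVarFinset → β) : (φ.restrictFreeVar f).IsQF := by
  induction hφ with
  | falsum => exact .falsum
  | of_isAtomic hatom =>
    cases hatom with
    | equal => exact (BoundedFormula.IsAtomic.equal _ _).isQF
    | rel => exact (BoundedFormula.IsAtomic.rel _ _).isQF
  | imp _ _ ih₁ ih₂ => exact (ih₁ _).imp (ih₂ _)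

theorem isQF_foldr_inf {l : List (L.BoundedFormula α n)} (hl : ∀ φ ∈ l, φ.IsQF) :
    (l.foldr (· ⊓ ·) ⊤).IsQF := by
  induction l with
  | nil => exact .top
  | cons φ l ih =>
    rw [List.forall_mem_cons] at hl
    exact hl.1.inf (ih hl.2)

theorem isQF_iInf [Finite β] {f : β → L.BoundedFormula α n} (hf : ∀ b, (f b).IsQF) :
    (BoundedFormula.iInf f).IsQF :=
  isQF_foldr_inf <| List.forall_mem_map.2 fun b _ => hf b

theorem isExistentialFormula_iExs [Finite β] {φ : L.Formula (α ⊕ β)} (hφ : φ.IsQF) :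
    IsExistentialFormula (φ.iExs β) :=
  ⟨_, _, hφ.relabel _, rfl⟩

theorem isExistentialFormula_exClosure [DecidableEq α] {φ : L.Formula α} (hφ : φ.IsQF) :
    IsExistentialFormula φ.exClosure :=
  isExistentialFormula_iExs ((isQF_restrictFreeVar hφ id).relabel _)

end QuantifierFree

section Diagram

variable {N : Type w} [L.Structure N] {K : Type*} [L.Structure K]

variable (L N) in
/-- The quantifier-free diagram of `N`: the quantifier-free sentences with parameters in `N` that
hold in `N`. The parameters enter as free variables indexed by `N` itself, evaluated at `id`. -/
def qfDiagram : L[[N]].Theory :=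
  Formula.equivSentence '' {χ : L.Formula N | χ.IsQF ∧ χ.Realize id}

/-- A map preserving quantifier-free formulas is an embedding; reflection of such formulas comes
from applying preservation to their negations. -/
def embeddingOfRealizeQF (c : N → K)
    (hc : ∀ χ : L.Formula N, χ.IsQF → χ.Realize id → χ.Realize c) : N ↪[L] K :=
  have realize_iff (χ : L.Formula N) (hχ : χ.IsQF) : χ.Realize c ↔ χ.Realize id :=
    ⟨fun hK => by_contra fun hN => hc χ.not hχ.not hN hK, hc χ hχ⟩
  { toFun := c
    inj' := fun x y hxy => by
      simpa [hxy] using realize_iff ((Term.var x).equal (Term.var y))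
        (BoundedFormula.IsAtomic.equal _ _).isQF
    map_fun' := fun f x => by
      simpa [eq_comm, Function.comp_def] using
        realize_iff ((Term.func f fun i => Term.var (x i)).equal (Term.var (Structure.funMap f x)))
          (BoundedFormula.IsAtomic.equal _ _).isQF
    map_rel' := fun R x => by
      simpa [Formula.realize_rel, Function.comp_def] using
        realize_iff (R.formula fun i => Term.var (x i)) (BoundedFormula.IsAtomic.rel _ _).isQF }

theorem nonempty_embedding_of_models_qfDiagram [L[[N]].Structure K]
    [(L.lhomWithConstants N).IsExpansionOn K] [hK : K ⊨ qfDiagram L N] : Nonempty (N ↪[L] K) :=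
  ⟨embeddingOfRealizeQF (fun x => (L.con x : K)) fun χ hχ hN =>
    (Formula.realize_equivSentence K χ).1 (hK.realize_of_mem _ ⟨χ, ⟨hχ, hN⟩, rfl⟩)⟩

end Diagram

section UniversalConsequences

variable {T : L.Theory} {N : Type w} [L.Structure N]

theorem exists_model_realize_of_isExistentialFormula (hN : N ⊨ univConsequences T)
    {σ : L.Sentence} (hσ : IsExistentialFormula σ) (hNσ : N ⊨ σ) :
    ∃ K : BStruc L, K.carrier ⊨ T ∧ K.carrier ⊨ σ := by
  obtain ⟨n, ψ, hψ, rfl⟩ := hσ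
  by_contra! no_model
  have alls_not_mem : ψ.not.alls ∈ univConsequences T := by
    refine ⟨⟨n, ψ.not, hψ.not, rfl⟩, fun K hK => BoundedFormula.realize_alls.2 fun xs hxs => ?_⟩
    exact no_model K hK (BoundedFormula.realize_exs.2 ⟨xs, hxs⟩)
  obtain ⟨xs, hxs⟩ := BoundedFormula.realize_exs.1 hNσ
  exact BoundedFormula.realize_alls.1 (hN.realize_of_mem _ alls_not_mem) xs hxs

theorem exists_model_realize_of_isQF (hN : N ⊨ univConsequences T) {α : Type*} {χ : L.Formula α}
    (hχ : χ.IsQF) {v : α → N} (hv : χ.Realize v) :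
    ∃ K : BStruc L, K.carrier ⊨ T ∧ ∃ w : α → K.carrier, χ.Realize w := by
  classical
  have hNχ : N ⊨ χ.exClosure :=
    let := constantsOn.structure v
    Formula.realize_exClosure_of_realize_equivSentence
      ((Formula.realize_equivSentence N χ).2 hv)
  obtain ⟨K, hK, hKχ⟩ :=
    exists_model_realize_of_isExistentialFormula hN (isExistentialFormula_exClosure hχ) hNχ
  obtain ⟨w, hw⟩ := Formula.exists_realize_equivSentence_iff_realize_exClosure.2 hKχ
  let := constantsOn.structure w
  exact ⟨K, hK, w, (Formula.realize_equivSentence _ χ).1 hw⟩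

theorem isSatisfiable_onTheory_union_qfDiagram (hN : N ⊨ univConsequences T) :
    ((L.lhomWithConstants N).onTheory T ∪ qfDiagram L N).IsSatisfiable := by
  let T' (χ : {χ : L.Formula N // χ.IsQF ∧ χ.Realize id}) : L[[N]].Theory :=
    (L.lhomWithConstants N).onTheory T ∪ {Formula.equivSentence χ.1}
  have subset_iUnion : (L.lhomWithConstants N).onTheory T ∪ qfDiagram L N ⊆ ⋃ χ, T' χ := by
    rintro σ (hσ | ⟨χ, hχ, rfl⟩)
    · exact Set.mem_iUnion.2 ⟨⟨⊤, .top, id⟩, .inl hσ⟩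
    · exact Set.mem_iUnion.2 ⟨⟨χ, hχ⟩, .inr rfl⟩
  refine Theory.IsSatisfiable.mono ?_ subset_iUnion
  refine (Theory.isSatisfiable_iUnion_iff_isSatisfiable_iUnion_finset T').2 fun s => ?_
  have conj_isQF : (Formula.iInf fun χ : s => χ.1.1).IsQF := isQF_iInf fun χ => χ.1.2.1
  have conj_realize : (Formula.iInf fun χ : s => χ.1.1).Realize (id : N → N) :=
    Formula.realize_iInf.2 fun χ => χ.1.2.2
  obtain ⟨K, hK, w, hw⟩ := exists_model_realize_of_isQF hN conj_isQF conj_realize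
  let := constantsOn.structure w
  have : K.carrier ⊨ ⋃ χ ∈ s, T' χ := by
    refine ⟨fun σ hσ => ?_⟩
    obtain ⟨χ, hχs, hσ | rfl⟩ := Set.mem_iUnion₂.1 hσ
    · exact (((L.lhomWithConstants N).onTheory_model T).2 hK).realize_of_mem σ hσ
    · exact (Formula.realize_equivSentence _ χ.1).2 (Formula.realize_iInf.1 hw ⟨χ, hχs⟩)
  exact Theory.Model.isSatisfiable K.carrier

theorem exists_model_embedding_of_models_univConsequences (hN : N ⊨ univConsequences T) :
    ∃ K : T.ModelType.{u, v, max u v w}, Nonempty (N ↪[L] K) := by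
  obtain ⟨K⟩ := isSatisfiable_onTheory_union_qfDiagram hN
  let : L.Structure K := (L.lhomWithConstants N).reduct K
  have : (L.lhomWithConstants N).IsExpansionOn K := LHom.isExpansionOn_reduct _ _
  have hKT : (K : Type _) ⊨ T :=
    ((L.lhomWithConstants N).onTheory_model T).1 (K.is_model.mono Set.subset_union_left)
  have hKN : (K : Type _) ⊨ qfDiagram L N := K.is_model.mono Set.subset_union_right
  have embeds : Nonempty (N ↪[L] K) := nonempty_embedding_of_models_qfDiagram
  exact ⟨.of T K, embeds⟩

end UniversalConsequences

section Sigma1Elementary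

variable {M N K : Type*} [L.Structure M] [L.Structure N] [L.Structure K]

theorem IsExistentialFormula.realize_embedding {α : Type*} {φ : L.Formula α}
    (hφ : IsExistentialFormula φ) (g : N ↪[L] K) {v : α → N} (hv : φ.Realize v) :
    φ.Realize (g ∘ v) := by
  obtain ⟨n, ψ, hψ, rfl⟩ := hφ
  obtain ⟨xs, hxs⟩ := BoundedFormula.realize_exs.1 hv
  exact BoundedFormula.realize_exs.2 ⟨g ∘ xs, (hψ.realize_embedding g).2 hxs⟩

theorem Sigma1Elementary.of_comp {g : N ↪[L] K} {j : M ↪[L] N}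
    (hgj : Sigma1Elementary (g.comp j)) : Sigma1Elementary j :=
  fun n φ hφ a ha => hgj n φ hφ a (hφ.realize_embedding g ha)

theorem realize_iExs_relabel_equiv {α β γ : Type*} [Finite β] (e : α ≃ γ) (χ : L.Formula (α ⊕ β))
    (a : α → M) :
    ((χ.relabel (Sum.map e id)).iExs β).Realize (a ∘ e.symm) ↔
      ∃ y : β → M, χ.Realize (Sum.elim a y) := by
  simp [Formula.realize_iExs, Sum.elim_comp_map, Function.comp_assoc]

theorem Sigma1Elementary.exists_realize_of_isQF {j : M ↪[L] N} (hj : Sigma1Elementary j)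
    {α β : Type*} [Finite α] [Finite β] {χ : L.Formula (α ⊕ β)} (hχ : χ.IsQF) {a : α → M}
    (h : ∃ y : β → N, χ.Realize (Sum.elim (j ∘ a) y)) : ∃ y : β → M, χ.Realize (Sum.elim a y) := by
  let e := Finite.equivFin α
  have isExistential : IsExistentialFormula ((χ.relabel (Sum.map e id)).iExs β) :=
    isExistentialFormula_iExs (hχ.relabel _)
  rw [← realize_iExs_relabel_equiv e] at h ⊢
  exact hj _ _ isExistential _ h

variable {α : Type*} {m k : ℕ}

theorem realize_exsN (φ : L.BoundedFormula α (m + k)) (v : α → M) (xs : Fin m → M) :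
    (exsN φ).Realize v xs ↔ ∃ ys : Fin k → M, φ.Realize v (Fin.append xs ys) := by
  induction k with
  | zero => simp [exsN, Unique.exists_iff, Fin.append_right_nil]
  | succ k ih =>
    simp only [exsN, ih, BoundedFormula.realize_ex, ← Fin.append_snoc]
    constructor
    · rintro ⟨ys, y, hy⟩
      exact ⟨Fin.snoc ys y, hy⟩
    · rintro ⟨ys, hys⟩
      exact ⟨Fin.init ys, ys (Fin.last k), by rwa [Fin.snoc_init_self]⟩

/-- The formula `φ` with all its bound variables made free, the first `m` (to become parameters)
kept apart from the last `k` (to be quantified existentially). -/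
def splitVars (φ : L.BoundedFormula α (m + k)) : L.Formula ((α ⊕ Fin m) ⊕ Fin k) :=
  φ.toFormula.relabel ((Equiv.sumAssoc _ _ _).symm ∘ Sum.map id finSumFinEquiv.symm)

theorem isQF_splitVars {φ : L.BoundedFormula α (m + k)} (hφ : φ.IsQF) : (splitVars φ).IsQF :=
  (isQF_toFormula hφ).relabel _

theorem realize_splitVars (φ : L.BoundedFormula α (m + k)) (v : α → M) (xs : Fin m → M)
    (ys : Fin k → M) :
    (splitVars φ).Realize (Sum.elim (Sum.elim v xs) ys) ↔ φ.Realize v (Fin.append xs ys) := by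
  rw [splitVars, Formula.realize_relabel, BoundedFormula.realize_toFormula, iff_iff_eq]
  congr 1
  ext i
  refine Fin.addCases (fun i => ?_) (fun i => ?_) i <;> simp

theorem Sigma1Elementary.realize_alls_exsN [Finite α] {j : M ↪[L] N} (hj : Sigma1Elementary j)
    {φ : L.BoundedFormula α (m + k)} (hφ : φ.IsQF) {a : α → M}
    (h : (exsN φ).alls.Realize (j ∘ a)) : (exsN φ).alls.Realize a := by
  refine BoundedFormula.realize_alls.2 fun b => ?_
  have hb := BoundedFormula.realize_alls.1 h (j ∘ b)
  simp only [realize_exsN, ← realize_splitVars, ← Sum.comp_elim] at hb ⊢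
  exact hj.exists_realize_of_isQF (isQF_splitVars hφ) hb

end Sigma1Elementary

theorem IsEC.sigma1Elementary_of_models_univConsequences {T : L.Theory} {M : Type*} [L.Structure M]
    (hM : IsEC T M) {N : Type (max u v)} [L.Structure N] (hN : N ⊨ univConsequences T)
    (j : M ↪[L] N) : Sigma1Elementary j := by
  obtain ⟨K, ⟨g⟩⟩ := exists_model_embedding_of_models_univConsequences hN
  exact .of_comp (hM.2 ⟨K⟩ K.is_model (g.comp j))

/-- If a Π₂ sentence with parameters in a `T`-ec structure `M` holds in a model of `T_∀`
extending `M`, then it holds in `M`. -/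
theorem pi2_reflects_to_ec (T : L.Theory)
    (M : Type (max u v)) [L.Structure M] [Nonempty M] (hM : IsEC T M)
    {p m k : ℕ} (φ : L.BoundedFormula (Fin p) (m + k)) (hφ : φ.IsQF)
    (a : Fin p → M) (N : BStruc L) (hN : N.carrier ⊨ univConsequences T)
    (j : M ↪[L] N.carrier)
    (h : ((exsN φ).alls).Realize (fun i => j (a i))) :
    ((exsN φ).alls).Realize a :=
  (hM.sigma1Elementary_of_models_univConsequences hN j).realize_alls_exsN hφ h

end ModelCompanionship
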